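/- With the Fock-module operators e_j, f_j defined below and with u = 0, the operator [e_2, f_0] = e_2∘f_0 − f_0∘e_2 on F satisfies [e_2, f_0]|λ⟩ = 2·|λ|·|λ⟩ for every partition λ, where |λ| = Σ_i λ_i. -/

import Mathlib

noncomputable section

/-- A partition: a weakly decreasing function `ℕ → ℕ` (0-indexed rows) that takes the
value `0` somewhere (hence eventually). -/
def IsPtn (f : ℕ → ℕ) : Prop := Antitone f ∧ ∃ N, f N = 0

/-- The type of partitions. -/
abbrev Ptn : Type := {f : ℕ → ℕ // IsPtn f}

/-- The Fock space: the free `ℂ`-vector space with basis indexed by all partitions. -/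
abbrev FockSp : Type := Ptn →₀ ℂ

namespace Fock

/-- The number of nonzero parts of a partition (the first 0-indexed row equal to zero). -/
def plen (lam : Ptn) : ℕ := Nat.find lam.2.2

/-- `|λ| = Σ_i λ_i`. -/
def psize (lam : Ptn) : ℕ := ∑ i ∈ Finset.range (plen lam), lam.1 i

/-- A box may be added in (0-indexed) row `i`, i.e. `λ + 1_i` is again a partition. -/
def Addable (lam : Ptn) (i : ℕ) : Prop := ∀ p, p < i → lam.1 i < lam.1 p

instance (lam : Ptn) (i : ℕ) : Decidable (Addable lam i) :=
  inferInstanceAs (Decidable (∀ p, p < i → lam.1 i < lam.1 p))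

/-- A box may be removed from (0-indexed) row `i`, i.e. `λ − 1_i` is again a partition. -/
def Removable (lam : Ptn) (i : ℕ) : Prop := lam.1 (i + 1) < lam.1 i

instance (lam : Ptn) (i : ℕ) : Decidable (Removable lam i) :=
  inferInstanceAs (Decidable (lam.1 (i + 1) < lam.1 i))

/-- The partition `λ + 1_i`. -/
def addBox (lam : Ptn) (i : ℕ) (h : Addable lam i) : Ptn :=
  ⟨Function.update lam.1 i (lam.1 i + 1), by
    constructor
    · intro a b hab
      rw [Function.update_apply, Function.update_apply]
      split_ifs with hb ha ha
      · exact le_rfl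
      · have : a < i := lt_of_le_of_ne (hb ▸ hab) ha
        exact h a this
      · have : lam.1 b ≤ lam.1 i := lam.2.1 (ha ▸ hab)
        omega
      · exact lam.2.1 hab
    · obtain ⟨N, hN⟩ := lam.2.2
      refine ⟨max N (i + 1), ?_⟩
      rw [Function.update_apply, if_neg (by omega : ¬ max N (i + 1) = i)]
      have := lam.2.1 (le_max_left N (i + 1))
      omega⟩

/-- The partition `λ − 1_i`. -/
def remBox (lam : Ptn) (i : ℕ) (h : Removable lam i) : Ptn :=
  ⟨Function.update lam.1 i (lam.1 i - 1), by
    constructor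
    · intro a b hab
      rw [Function.update_apply, Function.update_apply]
      split_ifs with hb ha ha
      · exact le_rfl
      · have : lam.1 i ≤ lam.1 a := lam.2.1 (le_of_lt (lt_of_le_of_ne (hb ▸ hab) ha))
        omega
      · have h1 : lam.1 b ≤ lam.1 (i + 1) := lam.2.1 (by omega : i + 1 ≤ b)
        have h2 : lam.1 (i + 1) < lam.1 i := h
        omega
      · exact lam.2.1 hab
    · obtain ⟨N, hN⟩ := lam.2.2
      refine ⟨max N (i + 1), ?_⟩
      rw [Function.update_apply, if_neg (by omega : ¬ max N (i + 1) = i)]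
      have := lam.2.1 (le_max_left N (i + 1))
      omega⟩

variable (h1 h2 u : ℂ)

/-- The coefficient of `|λ + 1_i⟩` in `e_j |λ⟩` (0-indexed row `i`). -/
def ecoef (j : ℕ) (lam : Ptn) (i : ℕ) : ℂ :=
  (1 / h1) *
  (∏ p ∈ Finset.range i,
    (((((lam.1 i : ℂ) - (lam.1 p : ℂ)) * h1 + (((i : ℂ) - (p : ℂ)) - 1) * h2)
        * (((lam.1 i : ℂ) - (lam.1 p : ℂ) + 1) * h1 + (((i : ℂ) - (p : ℂ)) + 1) * h2))
      / ((((lam.1 i : ℂ) - (lam.1 p : ℂ)) * h1 + ((i : ℂ) - (p : ℂ)) * h2)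
        * (((lam.1 i : ℂ) - (lam.1 p : ℂ) + 1) * h1 + ((i : ℂ) - (p : ℂ)) * h2)))) *
  ((lam.1 i : ℂ) * h1 + (i : ℂ) * h2 + u) ^ j

/-- The coefficient of `|λ − 1_i⟩` in `f_j |λ⟩` (0-indexed row `i`). -/
def fcoef (j : ℕ) (lam : Ptn) (i : ℕ) : ℂ :=
  (-(1 / h1)) *
  ((((lam.1 (i+1) : ℂ) - (lam.1 i : ℂ)) * h1)
      / ((((lam.1 (i+1) : ℂ) - (lam.1 i : ℂ)) + 1) * h1 + h2)) *
  (∏ p ∈ Finset.Icc (i + 1) (plen lam),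
    (((((lam.1 p : ℂ) - (lam.1 i : ℂ) + 1) * h1 + (((p : ℂ) - (i : ℂ)) + 1) * h2)
        * (((lam.1 (p+1) : ℂ) - (lam.1 i : ℂ)) * h1 + ((p : ℂ) - (i : ℂ)) * h2))
      / ((((lam.1 (p+1) : ℂ) - (lam.1 i : ℂ) + 1) * h1 + (((p : ℂ) - (i : ℂ)) + 1) * h2)
        * (((lam.1 p : ℂ) - (lam.1 i : ℂ)) * h1 + ((p : ℂ) - (i : ℂ)) * h2)))) *
  (((lam.1 i : ℂ) - 1) * h1 + (i : ℂ) * h2 + u) ^ j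

/-- `e_j |λ⟩`, a finite sum over the rows where a box can be added (all of which lie in
`{0, …, plen λ}`). -/
def evec (j : ℕ) (lam : Ptn) : FockSp :=
  ∑ i ∈ Finset.range (plen lam + 1),
    if h : Addable lam i then Finsupp.single (addBox lam i h) (ecoef h1 h2 u j lam i) else 0

/-- `f_j |λ⟩`, a finite sum over the rows where a box can be removed (all of which lie in
`{0, …, plen λ − 1}`). -/
def fvec (j : ℕ) (lam : Ptn) : FockSp :=
  ∑ i ∈ Finset.range (plen lam),
    if h : Removable lam i then Finsupp.single (remBox lam i h) (fcoef h1 h2 u j lam i) else 0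

/-- The Fock-module operator `e_j`. -/
def eOp (j : ℕ) : Module.End ℂ FockSp :=
  Finsupp.lsum ℂ fun lam => LinearMap.toSpanSingleton ℂ FockSp (evec h1 h2 u j lam)

/-- The Fock-module operator `f_j`. -/
def fOp (j : ℕ) : Module.End ℂ FockSp :=
  Finsupp.lsum ℂ fun lam => LinearMap.toSpanSingleton ℂ FockSp (fvec h1 h2 u j lam)

/-- `ψ_k := [e_k, f_0]`. -/
def psiOp (k : ℕ) : Module.End ℂ FockSp :=
  eOp h1 h2 u k * fOp h1 h2 u 0 - fOp h1 h2 u 0 * eOp h1 h2 u k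

end Fock


open Fock

/-!
Row `k` of `λ` ends at `x k = λ_k h1 + k h2 + u`, and the matrix elements of `e_j` and `f_l` are
products of two-row interaction factors times powers of row ends. Adding a box in row `i` commutes
with removing one from row `k ≠ i`, because the interaction factor `φ` satisfies
`φ (-h1 - t) = φ t`; so `[e_j, f_l]` is diagonal. Its diagonal entries are, up to the factor
`1 / (h1 h2 h3)`, the sums of the residues of `ψ(z) z ^ (j + l)` at the poles of the rational
function `ψ(z) = ∏ k, (z - x k + h1 + h2) (z - x k - h2) / ((z - x k) (z - x k + h1))`;
a pole at a row where no box can be added or removed is cancelled by a zero. The sum of these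
residues is a coefficient of the expansion of `ψ` at infinity, hence for `j + l = 2` a polynomial in
the first three power sums of the poles and zeros.
-/

namespace Fock

open Finset

section Residues

variable {K ι : Type*} [Field K] [DecidableEq ι] (a b : ι → K) (S : Finset ι)

/-- The residue at the simple pole `a i` of the rational function
`∏ j ∈ S, (z - b j) / (z - a j)`, for poles `a j` that are distinct for `j ∈ S`. -/
def residue (i : ι) : K :=
  (∏ j ∈ S, (a i - b j)) / ∏ j ∈ S.erase i, (a i - a j)

/-- The `k`-th moment of the residues of `∏ j ∈ S, (z - b j) / (z - a j)`, which is the coefficient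
of `z ^ (-k - 1)` in the expansion of that function at infinity. -/
def residueMoment (k : ℕ) : K :=
  ∑ i ∈ S, residue a b S i * a i ^ k

variable {a b S}

lemma residue_eq_zero_of_eq {i j : ι} (hj : j ∈ S) (hij : a i = b j) : residue a b S i = 0 := by
  rw [residue, prod_eq_zero hj (sub_eq_zero.2 hij), zero_div]

lemma residue_insert_of_ne {s i : ι} (hs : s ∉ S) (hi : i ≠ s) :
    residue a b (insert s S) i = residue a b S i * ((a i - b s) / (a i - a s)) := by
  rw [residue, residue, prod_insert hs, erase_insert_of_ne hi.symm,
    prod_insert (fun h => hs (mem_of_mem_erase h)), mul_div_mul_comm, mul_comm]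

open Lagrange Polynomial in
lemma residueMoment_zero (ha : Set.InjOn a S) :
    residueMoment a b S 0 = ∑ i ∈ S, (a i - b i) := by
  rcases S.eq_empty_or_nonempty with rfl | hS
  · simp [residueMoment]
  have hdeg : (nodal S b - nodal S a).degree < #S := by
    rw [← degree_nodal (s := S) (v := b)]
    exact degree_sub_lt_left (by simp only [degree_nodal]) nodal_ne_zero
      (by rw [nodal_monic.leadingCoeff, nodal_monic.leadingCoeff])
  calc residueMoment a b S 0
      = ∑ i ∈ S, (nodal S b - nodal S a).eval (a i) / ∏ j ∈ S.erase i, (a i - a j) := by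
        refine sum_congr rfl fun i hi => ?_
        rw [eval_sub, eval_nodal_at_node hi, sub_zero, eval_nodal, pow_zero, mul_one, residue]
    _ = (nodal S b - nodal S a).coeff (#S - 1) := (coeff_eq_sum ha hdeg).symm
    _ = ∑ i ∈ S, (a i - b i) := by
        rw [coeff_sub, nodal_eq, nodal_eq, prod_X_sub_C_coeff_card_pred _ _ hS.card_pos,
          prod_X_sub_C_coeff_card_pred _ _ hS.card_pos, sum_sub_distrib]
        ring

/- This is multiplication of the rational function by `(z - b s) / (z - a s)`, read off on the
coefficients of its expansion at infinity. -/
lemma residueMoment_insert_succ {s : ι} (hs : s ∉ S) (ha : Set.InjOn a (insert s S)) (k : ℕ) :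
    residueMoment a b (insert s S) (k + 1) =
      a s * residueMoment a b (insert s S) k + residueMoment a b S (k + 1)
        - b s * residueMoment a b S k := by
  have hterm : ∀ i ∈ S, residue a b (insert s S) i * (a i ^ (k + 1) - a s * a i ^ k) =
      residue a b S i * a i ^ (k + 1) - b s * (residue a b S i * a i ^ k) := fun i hi => by
    have his : i ≠ s := ne_of_mem_of_not_mem hi hs
    have hne : a i - a s ≠ 0 := sub_ne_zero.2 fun h => his (ha (by simp [hi]) (by simp) h)
    rw [residue_insert_of_ne hs his]
    field_simp
    ring
  have hsum := sum_congr rfl hterm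
  simp only [mul_sub, mul_left_comm _ (a s), sum_sub_distrib, ← mul_sum] at hsum
  simp only [residueMoment, sum_insert hs]
  linear_combination hsum

lemma two_mul_residueMoment_one (ha : Set.InjOn a S) :
    2 * residueMoment a b S 1 =
      (∑ i ∈ S, (a i - b i)) ^ 2 + ∑ i ∈ S, (a i ^ 2 - b i ^ 2) := by
  induction S using Finset.induction_on with
  | empty => simp [residueMoment]
  | insert s S hs ih =>
    rw [coe_insert] at ha
    have haS := ha.mono (Set.subset_insert s (S : Set ι))
    rw [residueMoment_insert_succ hs ha, residueMoment_zero (by rwa [coe_insert]),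
      residueMoment_zero haS, sum_insert hs, sum_insert hs]
    linear_combination ih haS

lemma six_mul_residueMoment_two (ha : Set.InjOn a S) :
    6 * residueMoment a b S 2 =
      (∑ i ∈ S, (a i - b i)) ^ 3
        + 3 * (∑ i ∈ S, (a i - b i)) * (∑ i ∈ S, (a i ^ 2 - b i ^ 2))
        + 2 * ∑ i ∈ S, (a i ^ 3 - b i ^ 3) := by
  induction S using Finset.induction_on with
  | empty => simp [residueMoment]
  | insert s S hs ih =>
    have hone := two_mul_residueMoment_one (b := b) ha
    rw [coe_insert] at ha
    have haS := ha.mono (Set.subset_insert s (S : Set ι))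
    rw [residueMoment_insert_succ hs ha]
    simp only [sum_insert hs] at hone ⊢
    linear_combination 3 * a s * hone + ih haS - 3 * b s * two_mul_residueMoment_one (b := b) haS

end Residues

section Partitions

variable (lam : Ptn)

lemma apply_eq_zero_iff {i : ℕ} : lam.1 i = 0 ↔ plen lam ≤ i :=
  ⟨Nat.find_min' lam.2.2, fun h => Nat.le_zero.1 <| (lam.2.1 h).trans_eq (Nat.find_spec lam.2.2)⟩

lemma sum_range_eq_psize {N : ℕ} (hN : plen lam ≤ N) : ∑ i ∈ range N, lam.1 i = psize lam :=
  (sum_subset (range_mono hN) fun _ _ hi =>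
    (apply_eq_zero_iff lam).2 <| not_lt.1 fun h => hi (mem_range.2 h)).symm

variable {lam}

lemma addable_iff {i : ℕ} : Addable lam i ↔ ∀ p, p + 1 = i → lam.1 i < lam.1 p :=
  ⟨fun h p hp => h p (by omega), fun h p hp =>
    (h (i - 1) (by omega)).trans_le (lam.2.1 (by omega))⟩

lemma Addable.le_plen {i : ℕ} (h : Addable lam i) : i ≤ plen lam := by
  by_contra! hi
  have := h _ hi
  rw [(apply_eq_zero_iff lam).2 le_rfl] at this
  omega

lemma Removable.lt_plen {i : ℕ} (h : Removable lam i) : i < plen lam := by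
  rw [← not_le, ← apply_eq_zero_iff]
  exact (Nat.zero_le _).trans_lt h |>.ne'

lemma coe_addBox {i : ℕ} (h : Addable lam i) :
    (addBox lam i h).1 = Function.update lam.1 i (lam.1 i + 1) := rfl

lemma coe_remBox {i : ℕ} (h : Removable lam i) :
    (remBox lam i h).1 = Function.update lam.1 i (lam.1 i - 1) := rfl

lemma plen_addBox_le {i : ℕ} (h : Addable lam i) : plen (addBox lam i h) ≤ plen lam + 1 := by
  have := h.le_plen
  rw [← apply_eq_zero_iff, coe_addBox, Function.update_of_ne (by omega), apply_eq_zero_iff]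
  omega

lemma plen_remBox_le {i : ℕ} (h : Removable lam i) : plen (remBox lam i h) ≤ plen lam := by
  rw [← apply_eq_zero_iff, coe_remBox, Function.update_of_ne h.lt_plen.ne', apply_eq_zero_iff]

lemma addable_remBox_self {i : ℕ} (h : Removable lam i) : Addable (remBox lam i h) i := by
  intro p hp
  have hpos : 0 < lam.1 i := Nat.zero_lt_of_lt h
  have hle := lam.2.1 hp.le
  rw [coe_remBox, Function.update_self, Function.update_of_ne hp.ne]
  omega

lemma removable_addBox_self {i : ℕ} (h : Addable lam i) : Removable (addBox lam i h) i := by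
  rw [Removable, coe_addBox, Function.update_self, Function.update_of_ne (by omega)]
  exact Nat.lt_succ_of_le (lam.2.1 i.le_succ)

lemma addBox_remBox_self {i : ℕ} (h : Removable lam i) :
    addBox (remBox lam i h) i (addable_remBox_self h) = lam := by
  have hpos : 0 < lam.1 i := Nat.zero_lt_of_lt h
  apply Subtype.ext
  rw [coe_addBox, coe_remBox, Function.update_idem, Function.update_self,
    Nat.sub_add_cancel hpos, Function.update_eq_self]

lemma remBox_addBox_self {i : ℕ} (h : Addable lam i) :
    remBox (addBox lam i h) i (removable_addBox_self h) = lam := by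
  apply Subtype.ext
  rw [coe_remBox, coe_addBox, Function.update_idem, Function.update_self,
    Nat.add_sub_cancel, Function.update_eq_self]

lemma addBox_remBox_comm {i k : ℕ} (hik : i ≠ k) (hk : Removable lam k)
    (hi : Addable (remBox lam k hk) i) (hi' : Addable lam i)
    (hk' : Removable (addBox lam i hi') k) :
    addBox (remBox lam k hk) i hi = remBox (addBox lam i hi') k hk' := by
  apply Subtype.ext
  rw [coe_addBox, coe_remBox, coe_remBox, coe_addBox, Function.update_of_ne hik,
    Function.update_of_ne hik.symm, Function.update_comm hik]

lemma exists_addable_remBox_iff {i k : ℕ} (hik : i ≠ k) :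
    (∃ h : Removable lam k, Addable (remBox lam k h) i) ↔
      ∃ h : Addable lam i, Removable (addBox lam i h) k := by
  simp only [addable_iff, coe_remBox, Removable.eq_def (addBox _ _ _), coe_addBox]
  simp only [Removable, Function.update_apply, exists_prop]
  rcases i with - | i
  · simp [hik.symm]
  · grind

end Partitions

section RowProducts

variable {K : Type*} [Field K] (h1 h2 : K) (x : ℕ → K)

/-- The interaction factor of two rows whose ends differ by `t` in the matrix elements of `e_j` and
`f_j`. -/
def rowFactor (t : K) : K :=
  (t + h1 + h2) * (t - h2) / (t * (t + h1))

lemma rowFactor_neg (t : K) : rowFactor h1 h2 (-h1 - t) = rowFactor h1 h2 t := by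
  unfold rowFactor
  congr 1 <;> ring

/-- The product of the interaction factors of a row ending at `z` with the rows above row `i`, where
row `p` ends at `x p`. -/
def upperProd (i : ℕ) (z : K) : K :=
  ∏ p ∈ range i, rowFactor h1 h2 (z - x p)

/-- The product of the interaction factors of a row ending at `z` with all the rows below row `i`,
where row `p` ends at `x p` and the rows from `m` on are empty: the factors of the latter, for which
`x (p + 1) = x p + h2`, telescope to the last quotient. -/
def lowerProd (i m : ℕ) (z : K) : K :=
  (∏ p ∈ Ico (i + 1) m, rowFactor h1 h2 (z - x p)) * ((z - x m + h1 + h2) / (z - x m))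

lemma lowerProd_succ {i m : ℕ} (h : i < m) (z : K) :
    lowerProd h1 h2 x i (m + 1) z = lowerProd h1 h2 x i m z *
      ((z - x m - h2) * (z - x (m + 1) + h1 + h2) /
        ((z - x (m + 1)) * (z - x m + h1))) := by
  rw [lowerProd, lowerProd, prod_Ico_succ_top h, rowFactor]
  simp only [div_eq_mul_inv, mul_inv]
  ring

lemma lowerProd_succ_of_eq_add {i m : ℕ} (him : i < m) (hx : x (m + 1) = x m + h2) {z : K}
    (hz : z - x (m + 1) ≠ 0) (hz' : z - x m + h1 ≠ 0) :
    lowerProd h1 h2 x i (m + 1) z = lowerProd h1 h2 x i m z := by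
  rw [lowerProd_succ h1 h2 x him, (div_eq_one_iff_eq (mul_ne_zero hz hz')).2 (by rw [hx]; ring),
    mul_one]

lemma upperProd_mul_lowerProd {k N : ℕ} (hk : k < N) (z : K) :
    upperProd h1 h2 x k z * lowerProd h1 h2 x k N z =
      (∏ p ∈ (range N).erase k, rowFactor h1 h2 (z - x p)) *
        ((z - x N + h1 + h2) / (z - x N)) := by
  have hsplit : (range N).erase k = range k ∪ Ico (k + 1) N := by ext; simp; omega
  have hdisj : Disjoint (range k) (Ico (k + 1) N) := by
    rw [disjoint_left]; simp; omega
  rw [hsplit, prod_union hdisj, upperProd, lowerProd, mul_assoc]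

variable {x} in
lemma upperProd_congr {y : ℕ → K} {i : ℕ} (h : ∀ p < i, y p = x p) (z : K) :
    upperProd h1 h2 y i z = upperProd h1 h2 x i z :=
  prod_congr rfl fun p hp => by rw [h p (mem_range.1 hp)]

variable {x} in
lemma lowerProd_congr {y : ℕ → K} {i m : ℕ} (him : i < m) (h : ∀ p, i < p → y p = x p) (z : K) :
    lowerProd h1 h2 y i m z = lowerProd h1 h2 x i m z := by
  rw [lowerProd, lowerProd, h m him]
  exact congrArg (· * _) (prod_congr rfl fun p hp => by rw [h p (mem_Ico.1 hp).1])

/- Only the factor of the two rows `i` and `k` changes, in the same way on both sides by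
`rowFactor_neg`. -/
lemma lowerProd_mul_upperProd_update {i k N : ℕ} (hik : i ≠ k) (hiN : i < N) (hkN : k < N) :
    lowerProd h1 h2 x k N (x k - h1) *
        upperProd h1 h2 (Function.update x k (x k - h1)) i (x i) =
      upperProd h1 h2 x i (x i) *
        lowerProd h1 h2 (Function.update x i (x i + h1)) k N (x k - h1) := by
  have hx : ∀ {q : ℕ} (c : K), ∀ p ≠ q, Function.update x q c p = x p :=
    fun c p hp => Function.update_of_ne hp c x
  rcases hik.lt_or_gt with hlt | hlt
  · rw [upperProd_congr h1 h2 fun p hp => hx _ p (hp.trans hlt).ne,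
      lowerProd_congr h1 h2 hkN fun p hp => hx _ p (hlt.trans hp).ne', mul_comm]
  · have hupper : ∀ y : ℕ → K, (∀ p, p ≠ k → y p = x p) → upperProd h1 h2 y i (x i) =
        rowFactor h1 h2 (x i - y k) * ∏ p ∈ (range i).erase k, rowFactor h1 h2 (x i - x p) :=
      fun y hy => by
        rw [upperProd, ← mul_prod_erase _ _ (mem_range.2 hlt)]
        exact congrArg (_ * ·) (prod_congr rfl fun p hp => by rw [hy p (ne_of_mem_erase hp)])
    have hlower : ∀ y : ℕ → K, (∀ p, p ≠ i → y p = x p) → lowerProd h1 h2 y k N (x k - h1) =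
        rowFactor h1 h2 (y i - x k) *
          (∏ p ∈ (Ico (k + 1) N).erase i, rowFactor h1 h2 (x k - h1 - x p)) *
          ((x k - h1 - x N + h1 + h2) / (x k - h1 - x N)) := fun y hy => by
      rw [lowerProd, hy N hiN.ne', ← mul_prod_erase _ _ (mem_Ico.2 ⟨hlt, hiN⟩),
        ← rowFactor_neg h1 h2 (y i - x k), show -h1 - (y i - x k) = x k - h1 - y i by ring]
      exact congrArg (_ * · * _) (prod_congr rfl fun p hp => by rw [hy p (ne_of_mem_erase hp)])
    rw [hupper _ (hx _), hupper x fun _ _ => rfl,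
      hlower _ (hx _), hlower x fun _ _ => rfl,
      Function.update_self, Function.update_self,
      show x i - (x k - h1) = x i + h1 - x k by ring]
    ring

end RowProducts

section EigenvalueSeries

variable {K : Type*} [Field K] (h1 h2 : K) (x : ℕ → K)

/-- The poles of the eigenvalue `ψ(z)` of the generating series of the `ψ_k` on a partition whose
row `p` ends at `x p`: the ends of the rows and the positions of their last boxes. -/
def psiPole : ℕ ⊕ ℕ → K :=
  Sum.elim x fun p => x p - h1

/-- The zeros of `ψ(z)`, indexed so that two of them accompany the poles of each row. -/
def psiZero : ℕ ⊕ ℕ → K :=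
  Sum.elim (fun p => x p - h1 - h2) fun p => x p + h2

/-- The index set of the zeros and poles of `ψ(z)` for a partition with at most `N` rows. Of the
contributions of the empty rows from `N` on, one pole and one zero of row `N` do not cancel. -/
def psiIndex (N : ℕ) : Finset (ℕ ⊕ ℕ) :=
  (range (N + 1)).disjSum (range N)

/-- The residue of `ψ(z)` at the pole with index `i`. -/
def psiResidue (N : ℕ) (i : ℕ ⊕ ℕ) : K :=
  residue (psiPole h1 x) (psiZero h1 h2 x) (psiIndex N) i

/-- The coefficient of `z ^ (-n - 1)` in the expansion of `ψ(z)` at infinity. -/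
def psiMoment (N n : ℕ) : K :=
  residueMoment (psiPole h1 x) (psiZero h1 h2 x) (psiIndex N) n

lemma psiIndex_erase_inl (N k : ℕ) :
    (psiIndex N).erase (Sum.inl k) = ((range (N + 1)).erase k).disjSum (range N) := by
  ext (p | p) <;> simp [psiIndex]

lemma psiIndex_erase_inr (N k : ℕ) :
    (psiIndex N).erase (Sum.inr k) = (range (N + 1)).disjSum ((range N).erase k) := by
  ext (p | p) <;> simp [psiIndex]

lemma prod_rowFactor (s : Finset ℕ) (z : K) :
    ∏ p ∈ s, rowFactor h1 h2 (z - x p) =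
      (∏ p ∈ s, (z - (x p - h1 - h2))) * (∏ p ∈ s, (z - (x p + h2))) /
        ((∏ p ∈ s, (z - x p)) * ∏ p ∈ s, (z - (x p - h1))) := by
  simp only [rowFactor, ← prod_mul_distrib, ← prod_div_distrib]
  exact prod_congr rfl fun p _ => by congr 1 <;> ring

lemma psiResidue_inl {k N : ℕ} (hk : k < N) :
    psiResidue h1 h2 x N (Sum.inl k) =
      -(h2 * (h1 + h2) / h1) *
        (upperProd h1 h2 x k (x k) * lowerProd h1 h2 x k N (x k)) := by
  rw [upperProd_mul_lowerProd h1 h2 x hk, prod_rowFactor, psiResidue, residue,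
    psiIndex_erase_inl, psiIndex, prod_disjSum, prod_disjSum, range_add_one,
    erase_insert_of_ne hk.ne', prod_insert (by simp),
    prod_insert (by simp), ← mul_prod_erase (range N) _ (mem_range.2 hk),
    ← mul_prod_erase (range N) _ (mem_range.2 hk), ← mul_prod_erase (range N) _ (mem_range.2 hk)]
  simp only [psiPole, psiZero, Sum.elim_inl, Sum.elim_inr, div_eq_mul_inv, mul_inv,
    sub_sub_cancel]
  ring

lemma psiResidue_inr {k N : ℕ} (hk : k < N) :
    psiResidue h1 h2 x N (Sum.inr k) =
      h2 * (h1 + h2) / h1 *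
        (upperProd h1 h2 x k (x k - h1) * lowerProd h1 h2 x k N (x k - h1)) := by
  rw [upperProd_mul_lowerProd h1 h2 x hk, prod_rowFactor, psiResidue, residue,
    psiIndex_erase_inr, psiIndex, prod_disjSum, prod_disjSum, range_add_one, prod_insert (by simp),
    prod_insert (by simp), ← mul_prod_erase (range N) _ (mem_range.2 hk),
    ← mul_prod_erase (range N) _ (mem_range.2 hk), ← mul_prod_erase (range N) _ (mem_range.2 hk)]
  simp only [psiPole, psiZero, Sum.elim_inl, Sum.elim_inr, div_eq_mul_inv, mul_inv,
    sub_sub_cancel]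
  ring

lemma psiMoment_eq_sum_range (N n : ℕ) :
    psiMoment h1 h2 x N n =
      ∑ k ∈ range N, (psiResidue h1 h2 x N (Sum.inl k) * x k ^ n +
        psiResidue h1 h2 x N (Sum.inr k) * (x k - h1) ^ n) +
      psiResidue h1 h2 x N (Sum.inl N) * x N ^ n := by
  rw [psiMoment, residueMoment, psiIndex, sum_disjSum, sum_range_succ, add_right_comm,
    ← sum_add_distrib]
  rfl

lemma sum_psiIndex (N : ℕ) (F : K → K) :
    ∑ i ∈ psiIndex N, (F (psiPole h1 x i) - F (psiZero h1 h2 x i)) =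
      F (x N) - F (x N - h1 - h2) + ∑ p ∈ range N,
        (F (x p) - F (x p - h1 - h2) + (F (x p - h1) - F (x p + h2))) := by
  rw [psiIndex, sum_disjSum, sum_range_succ, sum_add_distrib,
    add_comm (∑ p ∈ range N, _), add_assoc]
  rfl

lemma six_mul_psiMoment_two (hinj : Function.Injective (psiPole h1 x)) (N : ℕ) :
    6 * psiMoment h1 h2 x N 2 =
      6 * (h1 + h2) * (x N ^ 2 - N * h2 ^ 2 - 2 * h2 * ∑ p ∈ range N, x p) := by
  have hp1 : ∑ i ∈ psiIndex N, (psiPole h1 x i - psiZero h1 h2 x i) = h1 + h2 := by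
    rw [sum_psiIndex h1 h2 x N fun z => z, sum_eq_zero fun p _ => by ring]
    ring
  have hp2 : ∑ i ∈ psiIndex N, (psiPole h1 x i ^ 2 - psiZero h1 h2 x i ^ 2) =
      x N ^ 2 - (x N - h1 - h2) ^ 2 - 2 * N * h2 * (h1 + h2) := by
    rw [sum_psiIndex h1 h2 x N fun z => z ^ 2,
      sum_congr rfl fun p _ => show _ = -2 * h2 * (h1 + h2) by ring, sum_const, card_range,
      nsmul_eq_mul]
    ring
  have hp3 : ∑ i ∈ psiIndex N, (psiPole h1 x i ^ 3 - psiZero h1 h2 x i ^ 3) =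
      x N ^ 3 - (x N - h1 - h2) ^ 3 - 6 * h2 * (h1 + h2) * ∑ p ∈ range N, x p
        + 3 * N * h1 * h2 * (h1 + h2) := by
    rw [sum_psiIndex h1 h2 x N fun z => z ^ 3,
      sum_congr rfl fun p _ =>
        show _ = -6 * h2 * (h1 + h2) * x p + 3 * h1 * h2 * (h1 + h2) by ring,
      sum_add_distrib, ← mul_sum, sum_const, card_range, nsmul_eq_mul]
    ring
  rw [psiMoment, six_mul_residueMoment_two hinj.injOn, hp1, hp2, hp3]
  ring

end EigenvalueSeries

section RowEnds

lemma ne_zero_of_linearIndependent_pair {M : Type*} [AddCommGroup M] {a b : M}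
    (h : LinearIndependent ℤ ![a, b]) : a ≠ 0 ∧ b ≠ 0 ∧ -a - b ≠ 0 := by
  refine ⟨h.ne_zero 0, h.ne_zero 1, fun hab => ?_⟩
  exact absurd (LinearIndependent.pair_iff.1 h (-1) (-1) (by
    rwa [neg_one_zsmul, neg_one_zsmul, ← sub_eq_add_neg])).1 (by decide)

variable (h1 h2 u : ℂ) (lam : Ptn)

/-- The coordinate of the first box to the right of row `i`, the argument of the power in
`e_j |λ⟩`. -/
def rowEnd (i : ℕ) : ℂ :=
  lam.1 i * h1 + i * h2 + u

variable {lam}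

lemma rowEnd_addBox {i : ℕ} (h : Addable lam i) :
    rowEnd h1 h2 u (addBox lam i h) =
      Function.update (rowEnd h1 h2 u lam) i (rowEnd h1 h2 u lam i + h1) := by
  ext p
  rcases eq_or_ne p i with rfl | hp
  · rw [Function.update_self, rowEnd, rowEnd, coe_addBox, Function.update_self]
    push_cast
    ring
  · rw [Function.update_of_ne hp, rowEnd, rowEnd, coe_addBox, Function.update_of_ne hp]

lemma rowEnd_remBox {i : ℕ} (h : Removable lam i) :
    rowEnd h1 h2 u (remBox lam i h) =
      Function.update (rowEnd h1 h2 u lam) i (rowEnd h1 h2 u lam i - h1) := by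
  ext p
  rcases eq_or_ne p i with rfl | hp
  · rw [Function.update_self, rowEnd, rowEnd, coe_remBox, Function.update_self,
      Nat.cast_pred (Nat.zero_lt_of_lt h)]
    ring
  · rw [Function.update_of_ne hp, rowEnd, rowEnd, coe_remBox, Function.update_of_ne hp]

lemma rowEnd_of_plen_le {i : ℕ} (hi : plen lam ≤ i) : rowEnd h1 h2 u lam i = i * h2 + u := by
  rw [rowEnd, (apply_eq_zero_iff lam).2 hi, Nat.cast_zero, zero_mul, zero_add]

lemma rowEnd_succ_of_apply_eq {i : ℕ} (h : lam.1 (i + 1) = lam.1 i) :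
    rowEnd h1 h2 u lam (i + 1) = rowEnd h1 h2 u lam i + h2 := by
  rw [rowEnd, rowEnd, h]
  push_cast
  ring

lemma rowEnd_succ_of_not_removable {i : ℕ} (h : ¬ Removable lam i) :
    rowEnd h1 h2 u lam (i + 1) = rowEnd h1 h2 u lam i + h2 :=
  rowEnd_succ_of_apply_eq h1 h2 u <| (lam.2.1 i.le_succ).antisymm (not_lt.1 h)

lemma exists_rowEnd_of_not_addable {i : ℕ} (h : ¬ Addable lam i) :
    ∃ p < i, rowEnd h1 h2 u lam i = rowEnd h1 h2 u lam p + h2 := by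
  rw [addable_iff] at h
  push Not at h
  obtain ⟨p, rfl, hp⟩ := h
  exact ⟨p, p.lt_succ_self, rowEnd_succ_of_not_removable h1 h2 u hp.not_gt⟩

variable (lam) in
lemma sum_rowEnd {N : ℕ} (hN : plen lam ≤ N) :
    ∑ p ∈ range N, rowEnd h1 h2 u lam p =
      psize lam * h1 + (N : ℂ) * (N - 1) / 2 * h2 + N * u := by
  have hgauss : ∑ p ∈ range N, (p : ℂ) = (N : ℂ) * (N - 1) / 2 := by
    rw [← Nat.cast_sum, sum_range_id, ← Nat.choose_two_right, Nat.cast_choose_two]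
  simp only [rowEnd, sum_add_distrib, ← sum_mul, hgauss, sum_const, card_range, nsmul_eq_mul]
  rw [← Nat.cast_sum, sum_range_eq_psize lam hN]

variable {h1 h2} (hlin : LinearIndependent ℤ ![h1, h2])
include hlin

variable (lam) in
lemma rowEnd_sub_rowEnd_add_ne_zero {i p : ℕ} (hip : i ≠ p) (c : ℤ) :
    rowEnd h1 h2 u lam i - rowEnd h1 h2 u lam p + c * h1 ≠ 0 := by
  intro h
  have := (LinearIndependent.pair_iff.1 hlin (lam.1 i - lam.1 p + c) (i - p) (by
    simp only [zsmul_eq_mul]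
    push_cast
    rw [← h, rowEnd, rowEnd]
    ring)).2
  omega

variable (lam) in
lemma psiPole_rowEnd_injective : Function.Injective (psiPole h1 (rowEnd h1 h2 u lam)) := by
  have hh1 : h1 ≠ 0 := hlin.ne_zero 0
  have hrow : Function.Injective (rowEnd h1 h2 u lam) := fun p q h => by
    by_contra hpq
    exact rowEnd_sub_rowEnd_add_ne_zero u lam hlin hpq 0 (by simp [h])
  refine hrow.sumElim (fun p q h => hrow (sub_left_injective h)) fun p q h => ?_
  rcases eq_or_ne p q with rfl | hpq
  · exact hh1 (by linear_combination h)
  · exact rowEnd_sub_rowEnd_add_ne_zero u lam hlin hpq 1 (by push_cast; linear_combination h)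

end RowEnds

section MatrixElements

variable (h1 h2 u : ℂ) (lam : Ptn)

lemma ecoef_eq (j i : ℕ) :
    ecoef h1 h2 u j lam i = 1 / h1 *
      upperProd h1 h2 (rowEnd h1 h2 u lam) i (rowEnd h1 h2 u lam i) *
        rowEnd h1 h2 u lam i ^ j := by
  rw [ecoef, upperProd]
  congr 2
  refine prod_congr rfl fun p _ => ?_
  rw [rowFactor, rowEnd, rowEnd]
  congr 1 <;> ring

lemma prod_Icc_eq_lowerProd {i m : ℕ} (him : i ≤ m) :
    (((lam.1 (i + 1) : ℂ) - lam.1 i) * h1 / (((lam.1 (i + 1) : ℂ) - lam.1 i + 1) * h1 + h2)) *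
      ∏ p ∈ Icc (i + 1) m,
        ((((lam.1 p : ℂ) - lam.1 i + 1) * h1 + ((p : ℂ) - i + 1) * h2) *
            (((lam.1 (p + 1) : ℂ) - lam.1 i) * h1 + ((p : ℂ) - i) * h2) /
          ((((lam.1 (p + 1) : ℂ) - lam.1 i + 1) * h1 + ((p : ℂ) - i + 1) * h2) *
            (((lam.1 p : ℂ) - lam.1 i) * h1 + ((p : ℂ) - i) * h2))) =
      lowerProd h1 h2 (rowEnd h1 h2 u lam) i (m + 1) (rowEnd h1 h2 u lam i - h1) := by
  induction m, him using Nat.le_induction with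
  | base =>
    rw [Icc_eq_empty (by omega), lowerProd, Ico_self, prod_empty, prod_empty, mul_one, one_mul,
      ← neg_div_neg_eq]
    simp only [rowEnd]
    push_cast
    congr 1 <;> ring
  | succ m him ih =>
    rw [prod_Icc_succ_top (by omega), ← mul_assoc, ih,
      lowerProd_succ h1 h2 _ (Nat.lt_succ_of_le him)]
    simp only [rowEnd]
    push_cast
    congr 2 <;> ring

variable {h1 h2 lam} (hlin : LinearIndependent ℤ ![h1, h2])
include hlin

lemma lowerProd_rowEnd_succ {i m : ℕ} (him : i < m) (hm : plen lam ≤ m) :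
    lowerProd h1 h2 (rowEnd h1 h2 u lam) i (m + 1) (rowEnd h1 h2 u lam i - h1) =
      lowerProd h1 h2 (rowEnd h1 h2 u lam) i m (rowEnd h1 h2 u lam i - h1) := by
  have hm' := (apply_eq_zero_iff lam).2 (hm.trans m.le_succ)
  have hne := rowEnd_sub_rowEnd_add_ne_zero u lam hlin him.ne 0
  have hne' := rowEnd_sub_rowEnd_add_ne_zero u lam hlin (him.trans m.lt_succ_self).ne (-1)
  refine lowerProd_succ_of_eq_add h1 h2 _ him
    (rowEnd_succ_of_apply_eq h1 h2 u (hm'.trans ((apply_eq_zero_iff lam).2 hm).symm)) ?_ ?_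
  · rwa [Int.cast_neg, Int.cast_one, neg_one_mul, ← sub_eq_add_neg, sub_right_comm] at hne'
  · rwa [Int.cast_zero, zero_mul, add_zero, ← sub_add_cancel (_ - _) h1, sub_right_comm] at hne

lemma fcoef_eq {i m : ℕ} (hi : i < plen lam) (hm : plen lam ≤ m) (l : ℕ) :
    fcoef h1 h2 u l lam i = -(1 / h1) *
      lowerProd h1 h2 (rowEnd h1 h2 u lam) i m (rowEnd h1 h2 u lam i - h1) *
        (rowEnd h1 h2 u lam i - h1) ^ l := by
  have hlower : ∀ {M}, plen lam ≤ M →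
      lowerProd h1 h2 (rowEnd h1 h2 u lam) i M (rowEnd h1 h2 u lam i - h1) =
        lowerProd h1 h2 (rowEnd h1 h2 u lam) i (plen lam) (rowEnd h1 h2 u lam i - h1) :=
    fun hM => Nat.le_induction rfl
      (fun M hM ih => (lowerProd_rowEnd_succ u hlin (hi.trans_le hM) hM).trans ih) _ hM
  rw [hlower hm, ← hlower (plen lam).le_succ, ← prod_Icc_eq_lowerProd h1 h2 u lam hi.le, fcoef,
    mul_assoc (-(1 / h1))]
  congr 2
  rw [rowEnd]
  ring

lemma fcoef_mul_ecoef_remBox {i k : ℕ} (hik : i ≠ k) (hk : Removable lam k) (hi : Addable lam i)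
    (hk' : Removable (addBox lam i hi) k) (j l : ℕ) :
    fcoef h1 h2 u l lam k * ecoef h1 h2 u j (remBox lam k hk) i =
      ecoef h1 h2 u j lam i * fcoef h1 h2 u l (addBox lam i hi) k := by
  have hcomm := lowerProd_mul_upperProd_update h1 h2 (rowEnd h1 h2 u lam) hik
    (Nat.lt_succ_of_le hi.le_plen) (hk.lt_plen.trans (plen lam).lt_succ_self)
  rw [fcoef_eq u hlin hk.lt_plen (plen lam).le_succ, ecoef_eq, ecoef_eq,
    fcoef_eq u hlin hk'.lt_plen (plen_addBox_le hi), rowEnd_remBox, rowEnd_addBox,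
    Function.update_of_ne hik, Function.update_of_ne hik.symm]
  linear_combination -(1 / h1) * (1 / h1) * (rowEnd h1 h2 u lam k - h1) ^ l *
    rowEnd h1 h2 u lam i ^ j * hcomm

end MatrixElements

section Operators

variable (h1 h2 u : ℂ) (lam : Ptn) (j l : ℕ)

lemma evec_eq_sum_range {N : ℕ} (hN : plen lam < N) :
    evec h1 h2 u j lam = ∑ i ∈ range N,
      if h : Addable lam i then Finsupp.single (addBox lam i h) (ecoef h1 h2 u j lam i) else 0 :=
  sum_subset (range_mono hN) fun _ _ hi => dif_neg fun h =>
    hi (mem_range.2 (Nat.lt_succ_of_le h.le_plen))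

lemma fvec_eq_sum_range {N : ℕ} (hN : plen lam ≤ N) :
    fvec h1 h2 u l lam = ∑ i ∈ range N,
      if h : Removable lam i then Finsupp.single (remBox lam i h) (fcoef h1 h2 u l lam i) else 0 :=
  sum_subset (range_mono hN) fun _ _ hi => dif_neg fun h => hi (mem_range.2 h.lt_plen)

lemma eOp_single (c : ℂ) : eOp h1 h2 u j (Finsupp.single lam c) = c • evec h1 h2 u j lam := by
  simp [eOp]

lemma fOp_single (c : ℂ) : fOp h1 h2 u l (Finsupp.single lam c) = c • fvec h1 h2 u l lam := by
  simp [fOp]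

/-- The component of `e_j f_l |λ⟩` in which a box is removed from row `k`, then one added in
row `i`. -/
def efTerm (k i : ℕ) : FockSp :=
  if hk : Removable lam k then
    if hi : Addable (remBox lam k hk) i then
      Finsupp.single (addBox (remBox lam k hk) i hi)
        (fcoef h1 h2 u l lam k * ecoef h1 h2 u j (remBox lam k hk) i)
    else 0
  else 0

/-- The component of `f_l e_j |λ⟩` in which a box is added in row `i`, then one removed from
row `k`. -/
def feTerm (k i : ℕ) : FockSp :=
  if hi : Addable lam i then
    if hk : Removable (addBox lam i hi) k then
      Finsupp.single (remBox (addBox lam i hi) k hk)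
        (ecoef h1 h2 u j lam i * fcoef h1 h2 u l (addBox lam i hi) k)
    else 0
  else 0

variable {lam}

lemma eOp_mul_fOp_single {N : ℕ} (hN : plen lam < N) :
    (eOp h1 h2 u j * fOp h1 h2 u l) (Finsupp.single lam 1) =
      ∑ k ∈ range N, ∑ i ∈ range N, efTerm h1 h2 u lam j l k i := by
  rw [Module.End.mul_apply, fOp_single, one_smul, fvec_eq_sum_range h1 h2 u lam l hN.le, map_sum]
  refine sum_congr rfl fun k _ => ?_
  by_cases hk : Removable lam k
  · simp only [efTerm, dif_pos hk]
    rw [eOp_single, evec_eq_sum_range h1 h2 u _ j ((plen_remBox_le hk).trans_lt hN), smul_sum]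
    refine sum_congr rfl fun i _ => ?_
    simp only [smul_dite, Finsupp.smul_single, smul_eq_mul, smul_zero]
  · simp [efTerm, hk]

lemma fOp_mul_eOp_single {N : ℕ} (hN : plen lam < N) :
    (fOp h1 h2 u l * eOp h1 h2 u j) (Finsupp.single lam 1) =
      ∑ k ∈ range N, ∑ i ∈ range N, feTerm h1 h2 u lam j l k i := by
  rw [sum_comm, Module.End.mul_apply, eOp_single, one_smul, evec_eq_sum_range h1 h2 u lam j hN,
    map_sum]
  refine sum_congr rfl fun i _ => ?_
  by_cases hi : Addable lam i
  · simp only [feTerm, dif_pos hi]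
    rw [fOp_single, fvec_eq_sum_range h1 h2 u _ l ((plen_addBox_le hi).trans hN), smul_sum]
    refine sum_congr rfl fun k _ => ?_
    simp only [smul_dite, Finsupp.smul_single, smul_eq_mul, smul_zero]
  · simp [feTerm, hi]

end Operators

section Commutator

variable {h1 h2 : ℂ} (u : ℂ) {lam : Ptn} (hlin : LinearIndependent ℤ ![h1, h2])

lemma psiResidue_inl_of_not_addable {k N : ℕ} (hk : k ≤ N) (h : ¬ Addable lam k) :
    psiResidue h1 h2 (rowEnd h1 h2 u lam) N (Sum.inl k) = 0 := by
  obtain ⟨p, hpk, hp⟩ := exists_rowEnd_of_not_addable h1 h2 u h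
  exact residue_eq_zero_of_eq (j := Sum.inr p)
    (inr_mem_disjSum.2 (mem_range.2 (hpk.trans_le hk))) hp

lemma psiResidue_inr_of_not_removable {k N : ℕ} (hk : k < N) (h : ¬ Removable lam k) :
    psiResidue h1 h2 (rowEnd h1 h2 u lam) N (Sum.inr k) = 0 := by
  refine residue_eq_zero_of_eq (j := Sum.inl (k + 1))
    (inl_mem_disjSum.2 (mem_range.2 (Nat.succ_lt_succ hk))) ?_
  rw [psiPole, psiZero, Sum.elim_inl, Sum.elim_inr, rowEnd_succ_of_not_removable h1 h2 u h]
  ring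

include hlin

lemma efTerm_eq_feTerm {i k : ℕ} (hik : i ≠ k) (j l : ℕ) :
    efTerm h1 h2 u lam j l k i = feTerm h1 h2 u lam j l k i := by
  have hiff := exists_addable_remBox_iff (lam := lam) hik
  by_cases hex : ∃ h : Removable lam k, Addable (remBox lam k h) i
  · obtain ⟨hi', hk'⟩ := hiff.1 hex
    obtain ⟨hk, hi⟩ := hex
    rw [efTerm, feTerm, dif_pos hk, dif_pos hi, dif_pos hi', dif_pos hk',
      addBox_remBox_comm hik hk hi hi' hk', fcoef_mul_ecoef_remBox u hlin hik hk hi' hk']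
  · simp only [efTerm, feTerm, not_exists.1 hex, not_exists.1 (mt hiff.2 hex), dite_false,
      dite_eq_ite, ite_self]

lemma efTerm_self {k N : ℕ} (hN : plen lam ≤ N) (hk : k < N) (j l : ℕ) :
    efTerm h1 h2 u lam j l k k = Finsupp.single lam ((h1 * h2 * (-h1 - h2))⁻¹ *
      (psiResidue h1 h2 (rowEnd h1 h2 u lam) N (Sum.inr k) *
        (rowEnd h1 h2 u lam k - h1) ^ (j + l))) := by
  by_cases hr : Removable lam k
  · obtain ⟨hh1, hh2, hh3⟩ := ne_zero_of_linearIndependent_pair hlin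
    rw [efTerm, dif_pos hr, dif_pos (addable_remBox_self hr), addBox_remBox_self hr,
      fcoef_eq u hlin hr.lt_plen hN, ecoef_eq, rowEnd_remBox, Function.update_self,
      upperProd_congr h1 h2 fun p hp => Function.update_of_ne hp.ne _ _, psiResidue_inr h1 h2 _ hk,
      pow_add]
    congr 1
    field_simp
    ring
  · rw [efTerm, dif_neg hr, psiResidue_inr_of_not_removable u hk hr, zero_mul, mul_zero,
      Finsupp.single_zero]

lemma feTerm_self {k N : ℕ} (hN : plen lam < N) (hk : k < N) (j l : ℕ) :
    feTerm h1 h2 u lam j l k k = -Finsupp.single lam ((h1 * h2 * (-h1 - h2))⁻¹ *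
      (psiResidue h1 h2 (rowEnd h1 h2 u lam) N (Sum.inl k) * rowEnd h1 h2 u lam k ^ (j + l))) := by
  by_cases ha : Addable lam k
  · obtain ⟨hh1, hh2, hh3⟩ := ne_zero_of_linearIndependent_pair hlin
    have hr := removable_addBox_self ha
    rw [feTerm, dif_pos ha, dif_pos hr, remBox_addBox_self ha,
      fcoef_eq u hlin hr.lt_plen ((plen_addBox_le ha).trans hN), ecoef_eq, rowEnd_addBox,
      Function.update_self, add_sub_cancel_right,
      lowerProd_congr h1 h2 hk fun p hp => Function.update_of_ne hp.ne' _ _,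
      psiResidue_inl h1 h2 _ hk, pow_add, ← Finsupp.single_neg]
    congr 1
    field_simp
    ring
  · rw [feTerm, dif_neg ha, psiResidue_inl_of_not_addable u hk.le ha, zero_mul, mul_zero,
      Finsupp.single_zero, neg_zero]

lemma commutator_single {N : ℕ} (hN : plen lam < N) (j l : ℕ) :
    (eOp h1 h2 u j * fOp h1 h2 u l - fOp h1 h2 u l * eOp h1 h2 u j) (Finsupp.single lam 1) =
      ((h1 * h2 * (-h1 - h2))⁻¹ * psiMoment h1 h2 (rowEnd h1 h2 u lam) N (j + l)) •
        Finsupp.single lam 1 := by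
  have hoff : ∀ k ∈ range N, ∑ i ∈ range N,
      (efTerm h1 h2 u lam j l k i - feTerm h1 h2 u lam j l k i) =
        efTerm h1 h2 u lam j l k k - feTerm h1 h2 u lam j l k k := fun k hk =>
    sum_eq_single_of_mem k hk fun i _ hik => sub_eq_zero.2 (efTerm_eq_feTerm u hlin hik j l)
  have hlast : psiResidue h1 h2 (rowEnd h1 h2 u lam) N (Sum.inl N) = 0 :=
    psiResidue_inl_of_not_addable u le_rfl fun h => hN.not_ge h.le_plen
  rw [LinearMap.sub_apply, eOp_mul_fOp_single h1 h2 u j l hN, fOp_mul_eOp_single h1 h2 u j l hN]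
  simp only [← sum_sub_distrib]
  rw [sum_congr rfl hoff, psiMoment_eq_sum_range, hlast, zero_mul, add_zero, mul_sum,
    Finsupp.smul_single_one, Finsupp.single_finsetSum]
  refine sum_congr rfl fun k hk => ?_
  rw [efTerm_self u hlin hN.le (mem_range.1 hk), feTerm_self u hlin hN (mem_range.1 hk),
    sub_neg_eq_add, ← Finsupp.single_add, mul_add, add_comm]

lemma psiMoment_two {N : ℕ} (hN : plen lam ≤ N) :
    psiMoment h1 h2 (rowEnd h1 h2 u lam) N 2 =
      (h1 + h2) * (u ^ 2 - 2 * h1 * h2 * psize lam) := by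
  have hsix := six_mul_psiMoment_two h1 h2 _ (psiPole_rowEnd_injective u lam hlin) N
  rw [sum_rowEnd h1 h2 u lam hN, rowEnd_of_plen_le h1 h2 u hN] at hsix
  linear_combination hsix / 6

end Commutator

end Fock

theorem fock_e2_f0_commutator_general (h1 h2 u : ℂ)
    (hgen : ∀ a b : ℤ, ¬(a = 0 ∧ b = 0) → (a : ℂ) * h1 + (b : ℂ) * h2 ≠ 0)
    (lam : Ptn) :
    psiOp h1 h2 u 2 (Finsupp.single lam 1) =
      (2 * (psize lam : ℂ) - u ^ 2 / (h1 * h2)) • Finsupp.single lam 1 := by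
  have hlin : LinearIndependent ℤ ![h1, h2] :=
    LinearIndependent.pair_iff.2 fun a b hab => by
      by_contra hne
      exact hgen a b hne (by simpa using hab)
  obtain ⟨hh1, hh2, hh3⟩ := ne_zero_of_linearIndependent_pair hlin
  rw [psiOp, commutator_single u hlin (plen lam).lt_succ_self, add_zero,
    psiMoment_two u hlin (plen lam).le_succ]
  congr 1
  field_simp
  ring

/-- For the Fock module of the affine Yangian of `gl_1` (with `u = 0`
and generic `h1, h2`), the operator `[e_2, f_0]` acts on the basis vector `|λ⟩` by the
scalar `2·|λ|`. -/
theorem fock_e2_f0_commutator (h1 h2 : ℂ)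
    (hgen : ∀ a b : ℤ, ¬(a = 0 ∧ b = 0) → (a : ℂ) * h1 + (b : ℂ) * h2 ≠ 0)
    (lam : Ptn) :
    (eOp h1 h2 0 2 * fOp h1 h2 0 0 - fOp h1 h2 0 0 * eOp h1 h2 0 2)
        (Finsupp.single lam 1)
      = (2 * (psize lam : ℂ)) • Finsupp.single lam 1 := by
  simpa [psiOp] using fock_e2_f0_commutator_general h1 h2 0 hgen lam

end
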